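/- Let b ≥ 1 be an integer and let (p,q) and (p′,q′) be two pairs of homogeneous polynomials of degrees b−1 and b respectively, each pair having no common zeros along Y. Then the ideals (x², xy, y³, xq − y²p) and (x², xy, y³, xq′ − y²p′) of S are equal if and only if there exists c ∈ k* such that p′ ≡ cp (mod (x,y)) and q′ ≡ cq (mod (x,y)). -/

import Mathlib

open MvPolynomial

/-- The pair `(p, q)` has no common zeros along the line `Y = {x = y = 0}`. -/
def NoCommonZerosAlongY {k : Type*} [Field k] (p q : MvPolynomial (Fin 4) k) : Prop :=
  ∀ c d : k, (c, d) ≠ (0, 0) → eval ![0, 0, c, d] p ≠ 0 ∨ eval ![0, 0, c, d] q ≠ 0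

/-!
Modulo `D = (x², xy, y³)` the two ideals are generated by `xq - y²p` and `xq' - y²p'`, so one
contains the other iff `x(q' - hq) - y²(p' - hp) ∈ D` for some `h`. Since `x, y` is a regular
sequence, this says that `p' ≡ hp` and `q' ≡ hq` modulo `(x, y)`. As `(x, y)` is a homogeneous
ideal, comparing homogeneous components allows `h` to be replaced by its constant term, which the
reverse inclusion forces to be a unit.
-/

section RegularSequence

variable {R : Type*} [CommRing R] {x y : R}

/-- The ideal `(x², xy, y³, xq - y²p)`; for coordinates `x, y` on `P³` and suitable forms `p, q`
it is the homogeneous ideal of a triple structure on the line `x = y = 0`. -/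
def tripleLineIdeal (x y p q : R) : Ideal R :=
  Ideal.span {x ^ 2, x * y, y ^ 3, x * q - y ^ 2 * p}

theorem mem_tripleLineIdeal_iff {p q f : R} :
    f ∈ tripleLineIdeal x y p q ↔
      ∃ h, f - h * (x * q - y ^ 2 * p) ∈ Ideal.span {x ^ 2, x * y, y ^ 3} := by
  have generators_perm : ({x ^ 2, x * y, y ^ 3, x * q - y ^ 2 * p} : Set R) =
      insert (x * q - y ^ 2 * p) {x ^ 2, x * y, y ^ 3} := by
    ext; simp only [Set.mem_insert_iff, Set.mem_singleton_iff]; tauto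
  rw [tripleLineIdeal, generators_perm, Ideal.mem_span_insert', ← (Equiv.neg R).exists_congr_right]
  simp only [Equiv.neg_apply, neg_mul, ← sub_eq_add_neg]

theorem mul_sub_sq_mul_mem_span {u v : R} (hu : u ∈ Ideal.span {x, y})
    (hv : v ∈ Ideal.span {x, y}) : x * u - y ^ 2 * v ∈ Ideal.span {x ^ 2, x * y, y ^ 3} := by
  obtain ⟨a, b, rfl⟩ := Ideal.mem_span_pair.mp hu
  obtain ⟨c, d, rfl⟩ := Ideal.mem_span_pair.mp hv
  exact Submodule.mem_span_triple.mpr ⟨a, b - c * y, -d, by ring⟩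

theorem mul_sub_sq_mul_mem_span_iff (hx : IsLeftRegular x) (hxy : ∀ f, x ∣ y * f → x ∣ f)
    {u v : R} : x * u - y ^ 2 * v ∈ Ideal.span {x ^ 2, x * y, y ^ 3} ↔
      u ∈ Ideal.span {x, y} ∧ v ∈ Ideal.span {x, y} := by
  refine ⟨fun h ↦ ?_, fun h ↦ mul_sub_sq_mul_mem_span h.1 h.2⟩
  obtain ⟨a, b, c, habc⟩ := Submodule.mem_span_triple.mp h
  have x_dvd : x ∣ y * (y * (v + y * c)) := ⟨u - a * x - b * y, by linear_combination habc⟩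
  obtain ⟨t, ht⟩ := hxy _ (hxy _ x_dvd)
  have u_eq : u = a * x + (b + y * t) * y := hx (by linear_combination y ^ 2 * ht - habc)
  exact ⟨Ideal.mem_span_pair.mpr ⟨a, b + y * t, u_eq.symm⟩,
    Ideal.mem_span_pair.mpr ⟨t, -c, by linear_combination -ht⟩⟩

theorem tripleLineIdeal_le_iff (hx : IsLeftRegular x) (hxy : ∀ f, x ∣ y * f → x ∣ f)
    {p q p' q' : R} : tripleLineIdeal x y p' q' ≤ tripleLineIdeal x y p q ↔
      ∃ h, p' - h * p ∈ Ideal.span {x, y} ∧ q' - h * q ∈ Ideal.span {x, y} := by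
  have le_iff_mem : tripleLineIdeal x y p' q' ≤ tripleLineIdeal x y p q ↔
      x * q' - y ^ 2 * p' ∈ tripleLineIdeal x y p q := by
    refine ⟨fun h ↦ h (Ideal.subset_span (by simp)), fun h ↦ Ideal.span_le.mpr ?_⟩
    rintro f (rfl | rfl | rfl | rfl)
    exacts [Ideal.subset_span (by simp), Ideal.subset_span (by simp),
      Ideal.subset_span (by simp), h]
  rw [le_iff_mem, mem_tripleLineIdeal_iff]
  refine exists_congr fun h ↦ ?_
  rw [show x * q' - y ^ 2 * p' - h * (x * q - y ^ 2 * p) =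
      x * (q' - h * q) - y ^ 2 * (p' - h * p) by ring, mul_sub_sq_mul_mem_span_iff hx hxy, and_comm]

theorem sub_mul_mem_of_mul_eq_one {I : Ideal R} {a b f g : R} (hab : a * b = 1)
    (h : g - b * f ∈ I) : f - a * g ∈ I := by
  rw [show f - a * g = -a * (g - b * f) by linear_combination -f * hab]
  exact I.mul_mem_left _ h

theorem one_sub_mul_mul_mem {I : Ideal R} {a b f g : R} (hf : f - a * g ∈ I)
    (hg : g - b * f ∈ I) : (1 - a * b) * f ∈ I := by
  rw [show (1 - a * b) * f = (f - a * g) + a * (g - b * f) by ring]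
  exact I.add_mem hf (I.mul_mem_left a hg)

end RegularSequence

section CommSemiring

variable {σ R : Type*} [CommSemiring R] {i j : σ}

theorem X_dvd_iff_coeff_eq_zero {f : MvPolynomial σ R} :
    X i ∣ f ↔ ∀ m : σ →₀ ℕ, m i = 0 → coeff m f = 0 := by
  rw [← Ideal.mem_span_singleton, ← Set.image_singleton, mem_ideal_span_X_image]
  simp only [Set.mem_singleton_iff, exists_eq_left, mem_support_iff, ne_eq, not_imp_not]

theorem X_dvd_of_X_dvd_X_mul (hij : i ≠ j) (f : MvPolynomial σ R) (h : X i ∣ X j * f) :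
    X i ∣ f := by
  rw [X_dvd_iff_coeff_eq_zero] at h ⊢
  intro m hm
  rw [← coeff_X_mul m j f]
  exact h _ (by simp [hm, hij])

attribute [local instance] MvPolynomial.gradedAlgebra

theorem isHomogeneous_span_X_image (s : Set σ) :
    (Ideal.span (X '' s) : Ideal (MvPolynomial σ R)).IsHomogeneous (homogeneousSubmodule σ R) := by
  refine Ideal.homogeneous_span _ _ ?_
  rintro _ ⟨i, -, rfl⟩
  exact ⟨1, isHomogeneous_X R i⟩

theorem homogeneousComponent_mul_of_isHomogeneous {n : ℕ} {f : MvPolynomial σ R}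
    (hf : f.IsHomogeneous n) (h : MvPolynomial σ R) :
    homogeneousComponent n (h * f) = C (coeff 0 h) * f := by
  have component_mul : homogeneousComponent n (h * f) = homogeneousComponent (n - n) h * f := by
    rw [← decomposition.decompose'_apply, ← decomposition.decompose'_apply]
    exact DirectSum.coe_decompose_mul_of_right_mem_of_le (homogeneousSubmodule σ R) hf le_rfl
  rwa [Nat.sub_self, homogeneousComponent_zero] at component_mul

theorem eval_eq_zero_of_mem_span_X_pair {s : σ → R} (hi : s i = 0) (hj : s j = 0)
    {f : MvPolynomial σ R} (hf : f ∈ Ideal.span {X i, X j}) : eval s f = 0 := by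
  obtain ⟨a, b, rfl⟩ := Ideal.mem_span_pair.mp hf
  simp [hi, hj]

end CommSemiring

section CommRing

variable {σ R : Type*} [CommRing R] {i j : σ}

attribute [local instance] MvPolynomial.gradedAlgebra

theorem sub_C_mul_mem_of_sub_mul_mem {I : Ideal (MvPolynomial σ R)}
    (hI : I.IsHomogeneous (homogeneousSubmodule σ R)) {n : ℕ} {f g h : MvPolynomial σ R}
    (hf : f.IsHomogeneous n) (hg : g.IsHomogeneous n) (hgf : g - h * f ∈ I) :
    g - C (coeff 0 h) * f ∈ I := by
  have component_mem := homogeneousComponent_mem_of_mem hI hgf n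
  rwa [map_sub, homogeneousComponent_mul_of_isHomogeneous hf, homogeneousComponent_of_mem hg,
    if_pos rfl] at component_mem

theorem tripleLineIdeal_X_le_iff (hij : i ≠ j) {m n : ℕ} {p q p' q' : MvPolynomial σ R}
    (hp : p.IsHomogeneous m) (hq : q.IsHomogeneous n)
    (hp' : p'.IsHomogeneous m) (hq' : q'.IsHomogeneous n) :
    tripleLineIdeal (X i) (X j) p' q' ≤ tripleLineIdeal (X i) (X j) p q ↔
      ∃ c : R, p' - C c * p ∈ Ideal.span {X i, X j} ∧ q' - C c * q ∈ Ideal.span {X i, X j} := by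
  rw [tripleLineIdeal_le_iff isRegular_X.left (X_dvd_of_X_dvd_X_mul hij)]
  refine ⟨fun ⟨h, hph, hqh⟩ ↦ ⟨coeff 0 h, ?_⟩, fun ⟨c, hc⟩ ↦ ⟨C c, hc⟩⟩
  have hI := isHomogeneous_span_X_image (R := R) {i, j}
  rw [Set.image_pair] at hI
  exact ⟨sub_C_mul_mem_of_sub_mul_mem hI hp hp' hph, sub_C_mul_mem_of_sub_mul_mem hI hq hq' hqh⟩

/-- Over a domain, `hpq` says that `p` and `q` do not both lie in `(X i, X j)`. -/
theorem stmt_5_general (hij : i ≠ j) {m n : ℕ} {p q p' q' : MvPolynomial σ R}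
    (hp : p.IsHomogeneous m) (hq : q.IsHomogeneous n)
    (hp' : p'.IsHomogeneous m) (hq' : q'.IsHomogeneous n)
    (hpq : ∀ a : R, C a * p ∈ Ideal.span {X i, X j} → C a * q ∈ Ideal.span {X i, X j} → a = 0) :
    tripleLineIdeal (X i) (X j) p q = tripleLineIdeal (X i) (X j) p' q' ↔
      ∃ c : Rˣ, p' - C (c : R) * p ∈ Ideal.span {X i, X j} ∧
        q' - C (c : R) * q ∈ Ideal.span {X i, X j} := by
  rw [le_antisymm_iff, tripleLineIdeal_X_le_iff hij hp' hq' hp hq,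
    tripleLineIdeal_X_le_iff hij hp hq hp' hq']
  constructor
  · rintro ⟨⟨d, hpd, hqd⟩, ⟨c, hpc, hqc⟩⟩
    have one_sub_eq_zero : 1 - d * c = 0 := hpq _
      (by simpa only [C_sub, C_1, C_mul] using one_sub_mul_mul_mem hpd hpc)
      (by simpa only [C_sub, C_1, C_mul] using one_sub_mul_mul_mem hqd hqc)
    have dc_eq_one : d * c = 1 := (sub_eq_zero.mp one_sub_eq_zero).symm
    exact ⟨Units.mkOfMulEqOne c d (by rw [mul_comm, dc_eq_one]), hpc, hqc⟩
  · rintro ⟨c, hpc, hqc⟩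
    have C_inv_mul : C ((c⁻¹ : Rˣ) : R) * C (c : R) = (1 : MvPolynomial σ R) := by
      rw [← C_mul, c.inv_mul, C_1]
    exact ⟨⟨(c⁻¹ : Rˣ), sub_mul_mem_of_mul_eq_one C_inv_mul hpc,
      sub_mul_mem_of_mul_eq_one C_inv_mul hqc⟩, c, hpc, hqc⟩

end CommRing

theorem NoCommonZerosAlongY.eq_zero_of_C_mul_mem {k : Type*} [Field k]
    {p q : MvPolynomial (Fin 4) k} (hpq : NoCommonZerosAlongY p q) (a : k)
    (hp : C a * p ∈ Ideal.span {X 0, X 1}) (hq : C a * q ∈ Ideal.span {X 0, X 1}) : a = 0 := by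
  have eval_p := eval_eq_zero_of_mem_span_X_pair (s := ![0, 0, 1, 0]) rfl rfl hp
  have eval_q := eval_eq_zero_of_mem_span_X_pair (s := ![0, 0, 1, 0]) rfl rfl hq
  rw [map_mul, eval_C, mul_eq_zero] at eval_p eval_q
  exact (hpq 1 0 (by simp)).elim eval_p.resolve_right eval_q.resolve_right

/-- two pairs `(p,q)` and `(p′,q′)` of homogeneous polynomials of degrees
`b−1, b`, each with no common zeros along `Y`, define the same triple line
`(x², xy, y³, xq − y²p)` iff they agree up to a nonzero scalar modulo `(x,y)`. -/
theorem stmt_5 {k : Type*} [Field k] [IsAlgClosed k] (b : ℕ) (hb : 1 ≤ b)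
    (p q p' q' : MvPolynomial (Fin 4) k)
    (hp : p.IsHomogeneous (b - 1)) (hq : q.IsHomogeneous b)
    (hp' : p'.IsHomogeneous (b - 1)) (hq' : q'.IsHomogeneous b)
    (hpq : NoCommonZerosAlongY p q) (hpq' : NoCommonZerosAlongY p' q') :
    (Ideal.span {X 0 ^ 2, X 0 * X 1, X 1 ^ 3, X 0 * q - X 1 ^ 2 * p} :
        Ideal (MvPolynomial (Fin 4) k))
        = Ideal.span {X 0 ^ 2, X 0 * X 1, X 1 ^ 3, X 0 * q' - X 1 ^ 2 * p'} ↔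
      ∃ c : k, c ≠ 0 ∧ p' - C c * p ∈ (Ideal.span {X 0, X 1} : Ideal (MvPolynomial (Fin 4) k)) ∧
        q' - C c * q ∈ (Ideal.span {X 0, X 1} : Ideal (MvPolynomial (Fin 4) k)) := by
  rw [← Units.exists_iff_ne_zero (p := fun c : k ↦ p' - C c * p ∈ Ideal.span {X 0, X 1} ∧
    q' - C c * q ∈ Ideal.span {X 0, X 1})]
  exact stmt_5_general (by decide) hp hq hp' hq' hpq.eq_zero_of_C_mul_mem
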